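/- Let X ∈ ℝ^{d×n} be deterministic and (ε,B)-orthonormal with ε < 1/λ_σ, let W ∈ ℝ^{ď×d} have i.i.d. N(0,1) entries, set X̌ = σ(WX)/√ď, and let Φ = E[X̌ᵀX̌] ∈ ℝ^{n×n}, where σ is twice differentiable with |σ'|,|σ''| ≤ λ_σ, E[σ(ξ)]=0, E[σ(ξ)²]=1 for ξ ~ N(0,1). Then there are universal constants C, c > 0 such that: (a) the operator norm satisfies ‖Φ‖ ≤ Cλ_σ²B²; and (b) with probability at least 1 − 2e^{−cn}, the operator norm satisfies ‖X̌‖ ≤ C(1 + √(n/ď))λ_σB. -/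

import Mathlib

/-!
Lemma (operator norm bounds): `‖Φ‖ ≤ Cλ_σ²B²`, and with probability at least
`1 − 2e^{−cn}`, `‖X̌‖ ≤ C(1 + √(n/ď))λ_σB`.
-/

open MeasureTheory ProbabilityTheory Filter Topology Matrix

noncomputable abbrev stdGaussian : Measure ℝ := gaussianReal 0 1

noncomputable abbrev gaussianVec (d : ℕ) : Measure (Fin d → ℝ) :=
  Measure.pi fun _ => stdGaussian

noncomputable abbrev gaussianMat (a b : ℕ) : Measure (Fin a → Fin b → ℝ) :=
  Measure.pi fun _ => gaussianVec b

/-- ℓ₂→ℓ₂ operator norm of a real matrix. -/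
noncomputable def opNorm {m n : ℕ} (X : Matrix (Fin m) (Fin n) ℝ) : ℝ :=
  ‖LinearMap.toContinuousLinearMap (Matrix.toEuclideanLin X)‖

/-- `(ε,B)`-orthonormality of the columns of a matrix. -/
def IsOrthonormal {d n : ℕ} (ε B : ℝ) (X : Matrix (Fin d) (Fin n) ℝ) : Prop :=
  (∀ α : Fin n, |(∑ i, X i α ^ 2) - 1| ≤ ε) ∧
  (∀ α β : Fin n, α ≠ β → |∑ i, X i α * X i β| ≤ ε) ∧
  opNorm X ≤ B ∧
  ∑ α : Fin n, ((∑ i, X i α ^ 2) - 1) ^ 2 ≤ B ^ 2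

/-!
A row `w` of `W` contributes `f(w) = σ(wᵀX)v` to `X̌v`, and `f` is `λ_σ B ‖v‖`-Lipschitz. By the
Maurey–Pisier argument `f(w) - E f` is sub-Gaussian: for an independent copy `w'`, write
`f(w') - f(w)` as an integral of `∇f` along the rotation from `w` to `w'`, note that at each angle
position and velocity are again independent standard Gaussians, and average by Jensen. The mean
`E f` is small because `E σ = 0`, so `E σ(wᵀx_α)` is at most `λ_σ |‖x_α‖² - 1|`, whose squares sum
to at most `(λ_σ B)²`. Hence `E f² ≲ (λ_σ B)²`, which is (a); a union bound over `1/2`-nets of the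
unit balls of `ℝ^ď` and `ℝ^n` applied to `uᵀX̌v` gives (b).
-/

open scoped NNReal RealInnerProductSpace

section SubGaussian

variable {Ω Ω' : Type*} [MeasurableSpace Ω] [MeasurableSpace Ω'] {μ : Measure Ω} {ν : Measure Ω'}

lemma memLp_comp_of_lipschitzWith {F G : Type*} [NormedAddCommGroup F] [NormedAddCommGroup G]
    [IsFiniteMeasure μ] {g : F → G} {K : ℝ≥0} (hg : LipschitzWith K g) {X : Ω → F}
    {p : ENNReal} (hX : MemLp X p μ) : MemLp (fun ω => g (X ω)) p μ := by
  have centered : LipschitzWith K fun x => g x - g 0 := by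
    simpa using hg.sub (LipschitzWith.const (g 0))
  simpa [Function.comp_def, Pi.add_def] using
    (centered.comp_memLp (sub_self _) hX).add (memLp_const (g 0))

lemma hasSubgaussianMGF_mono {X : Ω → ℝ} {c c' : ℝ≥0} (hX : HasSubgaussianMGF X c μ)
    (hc : c ≤ c') : HasSubgaussianMGF X c' μ where
  integrable_exp_mul := hX.integrable_exp_mul
  mgf_le t := (hX.mgf_le t).trans (by gcongr)

lemma hasSubgaussianMGF_prod_of_forall [IsProbabilityMeasure μ] [SFinite ν] {X : Ω × Ω' → ℝ}
    {c : ℝ≥0} (hXm : AEStronglyMeasurable X (μ.prod ν))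
    (hX : ∀ x, HasSubgaussianMGF (fun y => X (x, y)) c ν) :
    HasSubgaussianMGF X c (μ.prod ν) := by
  have fiber_le (t : ℝ) (x : Ω) : ∫ y, Real.exp (t * X (x, y)) ∂ν ≤ Real.exp (c * t ^ 2 / 2) :=
    (hX x).mgf_le t
  have exp_int (t : ℝ) : Integrable (fun p => Real.exp (t * X p)) (μ.prod ν) := by
    have exp_meas := Real.continuous_exp.comp_aestronglyMeasurable (hXm.const_mul t)
    refine (integrable_prod_iff exp_meas).2
      ⟨ae_of_all _ fun x => (hX x).integrable_exp_mul t, ?_⟩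
    refine .of_bound exp_meas.norm.integral_prod_right' (Real.exp (c * t ^ 2 / 2))
      (ae_of_all _ fun x => ?_)
    simp only [Real.norm_eq_abs, Real.abs_exp]
    rw [abs_of_nonneg (integral_nonneg fun _ => (Real.exp_pos _).le)]
    exact fiber_le t x
  refine ⟨exp_int, fun t => ?_⟩
  calc mgf X (μ.prod ν) t = ∫ x, ∫ y, Real.exp (t * X (x, y)) ∂ν ∂μ := integral_prod _ (exp_int t)
    _ ≤ ∫ _, Real.exp (c * t ^ 2 / 2) ∂μ :=
      integral_mono (exp_int t).integral_prod_left (integrable_const _) (fiber_le t)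
    _ = Real.exp (c * t ^ 2 / 2) := by simp

lemma hasSubgaussianMGF_integral_left [IsProbabilityMeasure μ] [SFinite ν] {X : Ω × Ω' → ℝ}
    {c : ℝ≥0} (hX : HasSubgaussianMGF X c (μ.prod ν)) :
    HasSubgaussianMGF (fun y => ∫ x, X (x, y) ∂μ) c ν := by
  have jensen (t : ℝ) : ∀ᵐ y ∂ν,
      Real.exp (t * ∫ x, X (x, y) ∂μ) ≤ ∫ x, Real.exp (t * X (x, y)) ∂μ := by
    filter_upwards [hX.integrable.prod_left_ae, (hX.integrable_exp_mul t).prod_left_ae]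
      with y hy hy_exp
    rw [← integral_const_mul]
    exact convexOn_exp.map_integral_le Real.continuous_exp.continuousOn isClosed_univ
      (by simp) (hy.const_mul t) hy_exp
  have exp_int (t : ℝ) : Integrable (fun y => Real.exp (t * ∫ x, X (x, y) ∂μ)) ν := by
    refine (hX.integrable_exp_mul t).integral_prod_right.mono'
      (Real.continuous_exp.comp_aestronglyMeasurable
        (hX.integrable.integral_prod_right.aestronglyMeasurable.const_mul t)) ?_
    filter_upwards [jensen t] with y hy
    simpa using hy
  refine ⟨exp_int, fun t => ?_⟩
  calc mgf (fun y => ∫ x, X (x, y) ∂μ) ν t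
      ≤ ∫ y, ∫ x, Real.exp (t * X (x, y)) ∂μ ∂ν :=
        integral_mono_ae (exp_int t) (hX.integrable_exp_mul t).integral_prod_right (jensen t)
    _ = mgf X (μ.prod ν) t := (integral_prod_symm _ (hX.integrable_exp_mul t)).symm
    _ ≤ Real.exp (c * t ^ 2 / 2) := hX.mgf_le t

lemma measureReal_lt_le_exp_of_hasSubgaussianMGF {X : Ω → ℝ} {c : ℝ≥0}
    (hX : HasSubgaussianMGF X c μ) {a : ℝ} (ha : 0 ≤ a) :
    μ.real {ω | a * √c < X ω} ≤ Real.exp (-a ^ 2 / 2) := by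
  rcases eq_or_ne c 0 with rfl | hc
  · have null : μ {ω | 0 < X ω} = 0 :=
      measure_mono_null (fun ω (hω : 0 < X ω) => hω.ne')
        hX.ae_eq_zero_of_hasSubgaussianMGF_zero
    simpa [measureReal_def, null] using (Real.exp_pos _).le
  · have hc' : (0 : ℝ) < c := by positivity
    have : IsFiniteMeasure μ := by
      simpa [integrable_const_iff_isFiniteMeasure] using hX.integrable_exp_mul 0
    calc μ.real {ω | a * √c < X ω} ≤ μ.real {ω | a * √c ≤ X ω} :=
          measureReal_mono fun ω (hω : a * √c < X ω) => hω.le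
      _ ≤ Real.exp (-(a * √c) ^ 2 / (2 * c)) := hX.measure_ge_le (by positivity)
      _ = Real.exp (-a ^ 2 / 2) := by
        rw [mul_pow, Real.sq_sqrt hc'.le]
        field_simp

lemma one_add_sq_div_two_le_cosh (x : ℝ) : 1 + x ^ 2 / 2 ≤ Real.cosh x := by
  have le_sinh : |x / 2| ≤ Real.sinh |x / 2| := Real.self_le_sinh_iff.2 (abs_nonneg _)
  have sq_le : (x / 2) ^ 2 ≤ Real.sinh (x / 2) ^ 2 := by
    rw [← sq_abs, ← sq_abs (Real.sinh _), Real.abs_sinh]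
    gcongr
  have cosh_half : Real.cosh x = 1 + 2 * Real.sinh (x / 2) ^ 2 := by
    rw [show x = 2 * (x / 2) by ring, Real.cosh_two_mul, Real.cosh_sq]
    ring_nf
  linarith

lemma integral_sq_le_of_hasSubgaussianMGF [IsProbabilityMeasure μ] {X : Ω → ℝ} {c : ℝ≥0}
    (hX : HasSubgaussianMGF X c μ) : ∫ ω, X ω ^ 2 ∂μ ≤ c := by
  -- `2 + t²X² ≤ exp(tX) + exp(-tX)`; with `s = t²/2` this bounds the second moment by a difference
  -- quotient of `s ↦ exp(cs)`, whose limit at `0` is `c`.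
  have moment_le (s : ℝ) (hs : 0 < s) :
      ∫ ω, X ω ^ 2 ∂μ ≤ s⁻¹ • (Real.exp (c * (0 + s)) - Real.exp (c * 0)) := by
    set t := √(2 * s)
    have t_sq : t ^ 2 = 2 * s := Real.sq_sqrt (by positivity)
    have sq_int : Integrable (fun ω => X ω ^ 2) μ := (hX.memLp 2).integrable_sq
    have exp_int (r : ℝ) := hX.integrable_exp_mul r
    have mgf_add_le := add_le_add (hX.mgf_le t) (hX.mgf_le (-t))
    have sq_le : ∫ ω, (2 + 2 * s * X ω ^ 2) ∂μ ≤ mgf X μ t + mgf X μ (-t) := by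
      rw [mgf, mgf, ← integral_add (exp_int t) (exp_int (-t))]
      refine integral_mono ((integrable_const _).add (sq_int.const_mul _))
        ((exp_int t).add (exp_int (-t))) fun ω => ?_
      have := one_add_sq_div_two_le_cosh (t * X ω)
      rw [Real.cosh_eq, mul_pow, t_sq, ← neg_mul] at this
      simp only
      linarith
    rw [integral_add (integrable_const _) (sq_int.const_mul _), integral_const_mul] at sq_le
    simp only [integral_const, probReal_univ, smul_eq_mul, neg_sq, t_sq] at sq_le mgf_add_le
    rw [zero_add, mul_zero, Real.exp_zero, smul_eq_mul, ← div_eq_inv_mul, le_div_iff₀ hs]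
    ring_nf at sq_le mgf_add_le ⊢
    linarith
  have slope : Tendsto (fun s : ℝ => s⁻¹ • (Real.exp (c * (0 + s)) - Real.exp (c * 0)))
      (𝓝[>] 0) (𝓝 c) := by
    have deriv : HasDerivAt (fun s : ℝ => Real.exp (c * s)) c 0 := by
      simpa using ((hasDerivAt_id (0 : ℝ)).const_mul (c : ℝ)).exp
    exact deriv.tendsto_slope_zero_right
  exact ge_of_tendsto slope (eventually_nhdsWithin_of_forall moment_le)

lemma hasSubgaussianMGF_sum_mul_eval {ι : Type*} [Fintype ι] [IsProbabilityMeasure μ]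
    {f : Ω → ℝ} {c : ℝ≥0} (hf : HasSubgaussianMGF f c μ) (hfm : Measurable f) (u : ι → ℝ) :
    HasSubgaussianMGF (fun W : ι → Ω => ∑ i, u i * f (W i)) ((∑ i, ‖u i‖₊ ^ 2) * c)
      (Measure.pi fun _ => μ) := by
  have indep : iIndepFun (fun i (W : ι → Ω) => u i * f (W i)) (Measure.pi fun _ => μ) :=
    iIndepFun_pi fun i => (hfm.const_mul (u i)).aemeasurable
  have summand (i : ι) : HasSubgaussianMGF (fun W : ι → Ω => u i * f (W i)) (‖u i‖₊ ^ 2 * c)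
      (Measure.pi fun _ => μ) := by
    have eval_f : HasSubgaussianMGF (fun W => f (W i)) c (Measure.pi fun _ : ι => μ) :=
      .of_map (measurable_pi_apply i).aemeasurable
        (by rwa [(measurePreserving_eval (fun _ => μ) i).map_eq])
    convert eval_f.const_mul (u i)
    exact NNReal.eq (congrArg (· * (c : ℝ)) (sq_abs (u i)))
  rw [Finset.sum_mul]
  exact HasSubgaussianMGF.sum_of_iIndepFun indep fun i _ => summand i

end SubGaussian

section GaussianConcentration

local notation "Rot" => ContinuousLinearMap.rotation

local notation "γ" => ProbabilityTheory.stdGaussian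

lemma pi_absolutelyContinuous {n : ℕ} {α : Fin n → Type*} [∀ i, MeasurableSpace (α i)]
    {μ ν : ∀ i, Measure (α i)} [∀ i, SigmaFinite (μ i)] [∀ i, SigmaFinite (ν i)]
    (h : ∀ i, μ i ≪ ν i) : Measure.pi μ ≪ Measure.pi ν := by
  induction n with
  | zero => rw [Measure.pi_of_empty μ, Measure.pi_of_empty ν]
  | succ n ih =>
    let e := MeasurableEquiv.piFinSuccAbove α 0
    rw [← ((measurePreserving_piFinSuccAbove μ 0).symm e).map_eq,
      ← ((measurePreserving_piFinSuccAbove ν 0).symm e).map_eq]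
    exact ((h 0).prod (ih fun j => h _)).map e.symm.measurable

section Calculus

variable {F : Type*} [NormedAddCommGroup F] [NormedSpace ℝ F] {f : F → ℝ} {K : ℝ≥0}

lemma integral_fderiv_comp_eq_sub (hf : LipschitzWith K f) {g g' : ℝ → F}
    (hg : ∀ t, HasDerivAt g (g' t) t) (hg' : Continuous g') {a b : ℝ}
    (hfg : ∀ᵐ t, t ∈ Set.uIoc a b → DifferentiableAt ℝ f (g t)) :
    ∫ t in a..b, fderiv ℝ f (g t) (g' t) = f (g b) - f (g a) := by
  have g_contDiff : ContDiff ℝ 1 g := by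
    rw [contDiff_one_iff_deriv, funext fun t => (hg t).deriv]
    exact ⟨fun t => (hg t).differentiableAt, hg'⟩
  obtain ⟨M, hM⟩ := g_contDiff.contDiffOn.exists_lipschitzOnWith one_ne_zero
    (convex_uIcc a b) isCompact_uIcc
  have ac : AbsolutelyContinuousOnInterval (f ∘ g) a b :=
    (hf.comp_lipschitzOnWith hM).absolutelyContinuousOnInterval
  refine .trans ?_ ac.integral_deriv_eq_sub
  refine intervalIntegral.integral_congr_ae ?_
  filter_upwards [hfg] with t ht htab
  exact ((ht htab).hasFDerivAt.comp_hasDerivAt t (hg t)).deriv.symm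

lemma continuous_rotation : Continuous fun q : ℝ × F × F => Rot q.1 q.2 := by
  simp only [ContinuousLinearMap.rotation_apply]
  fun_prop

lemma integral_fderiv_rotation_eq_sub (hf : LipschitzWith K f) {p : F × F}
    (hp : ∀ᵐ θ : ℝ, DifferentiableAt ℝ f (Rot θ p).1) :
    ∫ θ in (0)..(Real.pi / 2), fderiv ℝ f (Rot θ p).1 (Rot θ p).2 = f p.2 - f p.1 := by
  have path_deriv (θ : ℝ) : HasDerivAt (fun θ => (Rot θ p).1) (Rot θ p).2 θ := by
    simp only [ContinuousLinearMap.rotation_apply]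
    exact ((Real.hasDerivAt_cos θ).smul_const p.1).add ((Real.hasDerivAt_sin θ).smul_const p.2)
  have velocity_cont : Continuous fun θ => (Rot θ p).2 := by
    simp only [ContinuousLinearMap.rotation_apply]
    fun_prop
  rw [integral_fderiv_comp_eq_sub hf path_deriv velocity_cont (hp.mono fun _ h _ => h)]
  simp [ContinuousLinearMap.rotation_apply]

end Calculus

variable {E : Type*} [NormedAddCommGroup E] [InnerProductSpace ℝ E] [FiniteDimensional ℝ E]
  [MeasurableSpace E] [BorelSpace E]

lemma stdGaussian_absolutelyContinuous_volume : γ E ≪ (volume : Measure E) := by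
  have basis_sum :
      (fun x : Fin (Module.finrank ℝ E) → ℝ => ∑ i, x i • stdOrthonormalBasis ℝ E i) =
        (stdOrthonormalBasis ℝ E).repr.symm ∘ WithLp.toLp 2 := by
    ext x
    simp [OrthonormalBasis.sum_repr_symm]
  have pres : MeasurePreserving ((stdOrthonormalBasis ℝ E).repr.symm ∘ WithLp.toLp 2) :=
    (stdOrthonormalBasis ℝ E).measurePreserving_repr_symm.comp (PiLp.volume_preserving_toLp _)
  rw [ProbabilityTheory.stdGaussian, basis_sum, ← pres.map_eq]
  exact (pi_absolutelyContinuous fun _ =>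
    gaussianReal_absolutelyContinuous 0 one_ne_zero).map pres.measurable

lemma map_strongDual_stdGaussian (L : StrongDual ℝ E) :
    (γ E).map L = gaussianReal 0 (‖L‖₊ ^ 2) := by
  rw [IsGaussian.map_eq_gaussianReal, integral_strongDual_stdGaussian, variance_dual_stdGaussian]
  congr 1
  ext
  simp

lemma hasSubgaussianMGF_strongDual_stdGaussian (L : StrongDual ℝ E) :
    HasSubgaussianMGF L (‖L‖₊ ^ 2) (γ E) := by
  refine HasSubgaussianMGF.of_map (X := id) (by fun_prop) ?_
  rw [map_strongDual_stdGaussian]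
  exact ⟨integrable_exp_mul_gaussianReal, fun t => by simp [mgf_id_gaussianReal]⟩

variable {f : E → ℝ} {K : ℝ≥0}

lemma measurable_fderiv_apply (f : E → ℝ) : Measurable fun p : E × E => fderiv ℝ f p.1 p.2 :=
  isBoundedBilinearMap_apply.continuous.measurable.comp
    (((measurable_fderiv ℝ f).comp measurable_fst).prodMk measurable_snd)

lemma hasSubgaussianMGF_fderiv_stdGaussian_prod (hf : LipschitzWith K f) :
    HasSubgaussianMGF (fun p : E × E => fderiv ℝ f p.1 p.2) (K ^ 2) ((γ E).prod (γ E)) := by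
  refine hasSubgaussianMGF_prod_of_forall (measurable_fderiv_apply f).aestronglyMeasurable fun x =>
    hasSubgaussianMGF_mono (hasSubgaussianMGF_strongDual_stdGaussian (fderiv ℝ f x)) ?_
  gcongr
  exact norm_fderiv_le_of_lipschitz ℝ hf

lemma measurePreserving_rotation_stdGaussian (θ : ℝ) :
    MeasurePreserving (Rot θ : E × E →L[ℝ] E × E) ((γ E).prod (γ E)) ((γ E).prod (γ E)) :=
  ⟨by fun_prop, IsGaussian.map_rotation_eq_self_of_forall_strongDual_eq_zero
    integral_strongDual_stdGaussian θ⟩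

lemma ae_ae_differentiableAt_rotation (hf : LipschitzWith K f) :
    ∀ᵐ p ∂(γ E).prod (γ E), ∀ᵐ θ : ℝ, DifferentiableAt ℝ f (Rot θ p).1 := by
  have joint_meas : MeasurableSet {q : (E × E) × ℝ | DifferentiableAt ℝ f (Rot q.2 q.1).1} :=
    (continuous_rotation.comp continuous_swap).fst.measurable
      (measurableSet_of_differentiableAt ℝ f)
  refine (Measure.ae_ae_comm joint_meas).2 (ae_of_all _ fun θ => ?_)
  have ae_diff : ∀ᵐ x ∂γ E, DifferentiableAt ℝ f x :=
    stdGaussian_absolutelyContinuous_volume.ae_le hf.ae_differentiableAt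
  exact (measurePreserving_rotation_stdGaussian θ).quasiMeasurePreserving.ae
    (Measure.quasiMeasurePreserving_fst.ae ae_diff)

lemma hasSubgaussianMGF_sub_stdGaussian_prod (hf : LipschitzWith K f) :
    HasSubgaussianMGF (fun p : E × E => f p.2 - f p.1) ((NNReal.pi / 2 * K) ^ 2)
      ((γ E).prod (γ E)) := by
  have half_pi_pos := Real.pi_div_two_pos
  let U : Measure ℝ := volume[|Set.Ioc 0 (Real.pi / 2)]
  have : IsProbabilityMeasure U :=
    cond_isProbabilityMeasure_of_finite (by simpa using Real.pi_pos) measure_Ioc_lt_top.ne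
  have speed (θ : ℝ) : HasSubgaussianMGF
      (fun p : E × E => fderiv ℝ f (Rot θ p).1 (Rot θ p).2) (K ^ 2) ((γ E).prod (γ E)) :=
    have rot := measurePreserving_rotation_stdGaussian (E := E) θ
    .of_map (X := fun p : E × E => fderiv ℝ f p.1 p.2) rot.aemeasurable
      (by rw [rot.map_eq]; exact hasSubgaussianMGF_fderiv_stdGaussian_prod hf)
  have average := hasSubgaussianMGF_integral_left (hasSubgaussianMGF_prod_of_forall (μ := U)
    ((measurable_fderiv_apply f).comp continuous_rotation.measurable).aestronglyMeasurable speed)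
  have average_eq : (fun p : E × E => Real.pi / 2 *
      ∫ θ, fderiv ℝ f (Rot θ p).1 (Rot θ p).2 ∂U) =ᵐ[(γ E).prod (γ E)]
      fun p => f p.2 - f p.1 := by
    filter_upwards [ae_ae_differentiableAt_rotation hf] with p hp
    rw [← integral_fderiv_rotation_eq_sub hf hp, intervalIntegral.integral_of_le half_pi_pos.le]
    simp only [U, ProbabilityTheory.cond, integral_smul_measure, Real.volume_Ioc, sub_zero,
      ENNReal.toReal_inv, ENNReal.toReal_ofReal half_pi_pos.le, smul_eq_mul]
    field_simp
  refine hasSubgaussianMGF_mono ((average.const_mul (Real.pi / 2)).congr average_eq) ?_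
  rw [mul_pow]
  exact le_rfl

lemma hasSubgaussianMGF_sub_integral_stdGaussian (hf : LipschitzWith K f) :
    HasSubgaussianMGF (fun x => f x - ∫ y, f y ∂γ E) ((NNReal.pi / 2 * K) ^ 2) (γ E) := by
  have f_int : Integrable f (γ E) :=
    memLp_one_iff_integrable.1 (memLp_comp_of_lipschitzWith hf (IsGaussian.memLp_id _ 1 (by simp)))
  refine (hasSubgaussianMGF_integral_left (hasSubgaussianMGF_sub_stdGaussian_prod hf)).congr
    (ae_of_all _ fun x => ?_)
  simp [integral_sub (integrable_const _) f_int]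

variable {ι : Type*} [Fintype ι]

lemma hasSubgaussianMGF_sub_integral_pi_gaussianReal {f : (ι → ℝ) → ℝ} {K : ℝ≥0}
    (hf : LipschitzWith K fun x : EuclideanSpace ℝ ι => f x.ofLp) :
    HasSubgaussianMGF (fun w => f w - ∫ z, f z ∂Measure.pi fun _ => gaussianReal 0 1)
      ((NNReal.pi / 2 * K) ^ 2) (Measure.pi fun _ => gaussianReal 0 1) := by
  have toLp_meas : AEMeasurable (WithLp.toLp 2 : (ι → ℝ) → EuclideanSpace ℝ ι)
      (Measure.pi fun _ => gaussianReal 0 1) := by fun_prop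
  have concentration := hasSubgaussianMGF_sub_integral_stdGaussian hf
  rw [← map_pi_eq_stdGaussian, integral_map toLp_meas
    hf.continuous.aestronglyMeasurable] at concentration
  exact concentration.of_map toLp_meas

lemma map_dotProduct_pi_gaussianReal (a : ι → ℝ) :
    (Measure.pi fun _ : ι => gaussianReal 0 1).map (fun w => w ⬝ᵥ a) =
      gaussianReal 0 (‖(WithLp.toLp 2 a : EuclideanSpace ℝ ι)‖₊ ^ 2) := by
  have comp_eq : (fun w : ι → ℝ => w ⬝ᵥ a) =
      innerSL ℝ (WithLp.toLp 2 a : EuclideanSpace ℝ ι) ∘ WithLp.toLp 2 := by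
    ext w
    simp [EuclideanSpace.inner_eq_star_dotProduct]
  rw [comp_eq, ← Measure.map_map (by fun_prop) (by fun_prop), map_pi_eq_stdGaussian,
    map_strongDual_stdGaussian]
  congr 2
  exact NNReal.eq (innerSL_apply_norm ℝ _)

lemma integral_abs_gaussianReal_le_one : ∫ x, |x| ∂gaussianReal 0 1 ≤ 1 := by
  have memLp_two : MemLp (fun x => x) 2 (gaussianReal 0 1) := memLp_id_gaussianReal 2
  have second_moment : ∫ x, x ^ 2 ∂gaussianReal 0 1 = 1 := by
    have := variance_id_gaussianReal (μ := 0) (v := 1)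
    rw [variance_of_integral_eq_zero aemeasurable_id (by simp)] at this
    simpa using this
  calc ∫ x, |x| ∂gaussianReal 0 1 ≤ ∫ x, (1 + x ^ 2) / 2 ∂gaussianReal 0 1 :=
        integral_mono (memLp_two.integrable one_le_two).abs
          (((integrable_const _).add memLp_two.integrable_sq).div_const 2)
          fun x => by nlinarith [sq_nonneg (|x| - 1), sq_abs x]
    _ = 1 := by
        rw [integral_div, integral_add (integrable_const _) memLp_two.integrable_sq]
        simp [second_moment]

lemma abs_integral_gaussianReal_le {σ : ℝ → ℝ} {K : ℝ≥0} (hσ : LipschitzWith K σ)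
    (hσ_mean : ∫ x, σ x ∂gaussianReal 0 1 = 0) (v : ℝ≥0) :
    |∫ x, σ x ∂gaussianReal 0 v| ≤ K * |(v : ℝ) - 1| := by
  set r := √(v : ℝ)
  have r_sq : r ^ 2 = v := Real.sq_sqrt v.coe_nonneg
  have law : (gaussianReal 0 1).map (r * ·) = gaussianReal 0 v := by
    rw [gaussianReal_map_const_mul]
    congr 1
    · simp
    · exact NNReal.eq (by simpa using r_sq)
  have scaled_int (s : ℝ) : Integrable (fun x => σ (s * x)) (gaussianReal 0 1) :=
    memLp_one_iff_integrable.1 (memLp_comp_of_lipschitzWith hσ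
      (MemLp.const_mul (memLp_id_gaussianReal 1) s))
  have abs_r_sub_one : |r - 1| ≤ |(v : ℝ) - 1| := by
    rw [← r_sq, show r ^ 2 - 1 = (r - 1) * (r + 1) by ring, abs_mul]
    refine le_mul_of_one_le_right (abs_nonneg _) ((le_abs_self _).trans' ?_)
    linarith [Real.sqrt_nonneg (v : ℝ)]
  calc |∫ x, σ x ∂gaussianReal 0 v| = |∫ x, (σ (r * x) - σ (1 * x)) ∂gaussianReal 0 1| := by
        rw [integral_sub (scaled_int r) (scaled_int 1), ← law,
          integral_map (by fun_prop) hσ.continuous.aestronglyMeasurable]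
        simp [hσ_mean]
    _ ≤ ∫ x, K * |r - 1| * |x| ∂gaussianReal 0 1 := by
        refine (Real.norm_eq_abs _).symm.trans_le
          (norm_integral_le_of_norm_le ?_ (ae_of_all _ fun x => ?_))
        · exact ((memLp_id_gaussianReal 1).integrable le_rfl).abs.const_mul _
        · rw [mul_assoc, ← abs_mul, sub_mul]
          exact hσ.norm_sub_le _ _
    _ = K * |r - 1| * ∫ x, |x| ∂gaussianReal 0 1 := integral_const_mul _ _
    _ ≤ K * |r - 1| * 1 := by
        gcongr
        exact integral_abs_gaussianReal_le_one
    _ ≤ K * |(v : ℝ) - 1| := by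
        rw [mul_one]
        gcongr

lemma memLp_comp_dotProduct {σ : ℝ → ℝ} {K : ℝ≥0} (hσ : LipschitzWith K σ)
    (a : ι → ℝ) (p : ℝ≥0) :
    MemLp (fun w => σ (w ⬝ᵥ a)) p (Measure.pi fun _ => gaussianReal 0 1) := by
  have dotProduct_meas : Measurable fun w : ι → ℝ => w ⬝ᵥ a := by fun_prop
  refine memLp_comp_of_lipschitzWith hσ ((memLp_map_measure_iff ?_ dotProduct_meas.aemeasurable).1
    (?_ : MemLp id p _))
  · exact aestronglyMeasurable_id
  · rw [map_dotProduct_pi_gaussianReal]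
    exact memLp_id_gaussianReal p

lemma abs_integral_comp_dotProduct_le {σ : ℝ → ℝ} {K : ℝ≥0} (hσ : LipschitzWith K σ)
    (hσ_mean : ∫ x, σ x ∂gaussianReal 0 1 = 0) (a : ι → ℝ) :
    |∫ w, σ (w ⬝ᵥ a) ∂Measure.pi fun _ => gaussianReal 0 1| ≤ K * |∑ i, a i ^ 2 - 1| := by
  have dotProduct_meas : AEMeasurable (fun w : ι → ℝ => w ⬝ᵥ a)
      (Measure.pi fun _ => gaussianReal 0 1) := by fun_prop
  have bound := abs_integral_gaussianReal_le hσ hσ_mean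
    (‖(WithLp.toLp 2 a : EuclideanSpace ℝ (ι))‖₊ ^ 2)
  rwa [← map_dotProduct_pi_gaussianReal,
    integral_map dotProduct_meas hσ.continuous.aestronglyMeasurable, NNReal.coe_pow, coe_nnnorm,
    EuclideanSpace.real_norm_sq_eq] at bound

end GaussianConcentration

section Nets

lemma card_le_of_isSeparated_half {E : Type*} [NormedAddCommGroup E] [NormedSpace ℝ E]
    [FiniteDimensional ℝ E] {C : Finset E} (hC : ↑C ⊆ Metric.closedBall (0 : E) 1)
    (hsep : Metric.IsSeparated ((1 / 2 : ℝ≥0) : ENNReal) (C : Set E)) :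
    C.card ≤ 5 ^ Module.finrank ℝ E := by
  classical
  have two_smul_inj : Function.Injective ((2 : ℝ) • · : E → E) :=
    smul_right_injective E two_ne_zero
  rw [← Finset.card_image_of_injective C two_smul_inj]
  refine Besicovitch.card_le_of_separated _ ?_ ?_
  · simp only [Finset.forall_mem_image, norm_smul, Real.norm_two]
    intro x hx
    have : ‖x‖ ≤ 1 := by simpa using hC hx
    linarith
  · simp only [Finset.forall_mem_image, ← smul_sub, norm_smul, Real.norm_two]
    intro x hx y hy hxy
    have edist_gt : ((1 / 2 : ℝ≥0) : ENNReal) < edist x y := hsep hx hy (ne_of_apply_ne _ hxy)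
    rw [edist_nndist, ENNReal.coe_lt_coe, ← NNReal.coe_lt_coe, coe_nndist, dist_eq_norm]
      at edist_gt
    push_cast at edist_gt
    linarith

lemma packingNumber_half_closedBall_le (E : Type*) [NormedAddCommGroup E] [NormedSpace ℝ E]
    [FiniteDimensional ℝ E] :
    Metric.packingNumber (1 / 2) (Metric.closedBall (0 : E) 1) ≤ 5 ^ Module.finrank ℝ E := by
  simp only [Metric.packingNumber, iSup_le_iff]
  intro C hC hsep
  by_contra! hlt
  obtain ⟨D, hDC, hD⟩ := Set.exists_subset_encard_eq (Order.add_one_le_of_lt hlt)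
  have D_fin : D.Finite :=
    Set.finite_of_encard_eq_coe (k := 5 ^ Module.finrank ℝ E + 1) (by exact_mod_cast hD)
  lift D to Finset E using D_fin
  rw [Set.encard_coe_eq_coe_finsetCard] at hD
  have card_eq : D.card = 5 ^ Module.finrank ℝ E + 1 := by exact_mod_cast hD
  have card_le := card_le_of_isSeparated_half (hDC.trans hC) (hsep.mono hDC)
  omega

lemma exists_finset_isCover_closedBall (E : Type*) [NormedAddCommGroup E] [NormedSpace ℝ E]
    [FiniteDimensional ℝ E] :
    ∃ N : Finset E, ↑N ⊆ Metric.closedBall (0 : E) 1 ∧ N.card ≤ 5 ^ Module.finrank ℝ E ∧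
      Metric.IsCover (1 / 2) (Metric.closedBall (0 : E) 1) N := by
  have card_le :=
    (Metric.coveringNumber_le_packingNumber (1 / 2) (Metric.closedBall (0 : E) 1)).trans
      (packingNumber_half_closedBall_le E)
  have ne_top : Metric.coveringNumber (1 / 2) (Metric.closedBall (0 : E) 1) ≠ ⊤ :=
    ne_top_of_le_ne_top (by exact_mod_cast ENat.natCast_ne_top (5 ^ Module.finrank ℝ E)) card_le
  rw [← Metric.encard_minimalCover ne_top, Metric.finite_minimalCover.encard_eq_coe_toFinset_card]
    at card_le
  refine ⟨Metric.finite_minimalCover.toFinset, ?_, by exact_mod_cast card_le, ?_⟩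
  · simpa using Metric.minimalCover_subset
  · simpa using Metric.isCover_minimalCover ne_top

lemma exists_norm_sub_le_of_isCover {E : Type*} [SeminormedAddCommGroup E] {r : ℝ≥0} {s N : Set E}
    (hN : Metric.IsCover r s N) {x : E} (hx : x ∈ s) : ∃ y ∈ N, ‖x - y‖ ≤ r := by
  simpa [dist_eq_norm] using Metric.isCover_iff_subset_iUnion_closedBall.1 hN hx

variable {E F : Type*} [NormedAddCommGroup E] [NormedSpace ℝ E] [NormedAddCommGroup F]

lemma norm_le_two_mul_of_isCover [InnerProductSpace ℝ F] {N : Set F}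
    (hN : Metric.IsCover (1 / 2) (Metric.closedBall (0 : F) 1) N) {y : F} {M : ℝ}
    (h : ∀ u ∈ N, ⟪u, y⟫ ≤ M) : ‖y‖ ≤ 2 * M := by
  obtain ⟨u, hu, hyu⟩ := exists_norm_sub_le_of_isCover hN (x := ‖y‖⁻¹ • y)
    (by simpa [norm_smul] using inv_mul_le_one)
  have inner_self : ⟪‖y‖⁻¹ • y, y⟫ = ‖y‖ := by
    rw [real_inner_smul_left, real_inner_self_eq_norm_sq, sq, ← mul_assoc]
    exact inv_mul_mul_self ‖y‖
  have inner_error : ⟪‖y‖⁻¹ • y - u, y⟫ ≤ (1 / 2 : ℝ≥0) * ‖y‖ :=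
    (real_inner_le_norm _ _).trans (by gcongr)
  rw [inner_sub_left, inner_self] at inner_error
  push_cast at inner_error
  linarith [h u hu]

lemma opNorm_le_two_mul_of_isCover [NormedSpace ℝ F] {N : Set E}
    (hN : Metric.IsCover (1 / 2) (Metric.closedBall (0 : E) 1) N) {T : E →L[ℝ] F} {M : ℝ}
    (h : ∀ v ∈ N, ‖T v‖ ≤ M) : ‖T‖ ≤ 2 * M := by
  have le_add_half (x : E) (hx : ‖x‖ ≤ 1) : ‖T x‖ ≤ M + ‖T‖ / 2 := by
    obtain ⟨v, hv, hxv⟩ := exists_norm_sub_le_of_isCover hN (x := x) (by simpa using hx)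
    calc ‖T x‖ = ‖T v + T (x - v)‖ := by simp
      _ ≤ ‖T v‖ + ‖T‖ * ‖x - v‖ := (norm_add_le _ _).trans (by gcongr; exact T.le_opNorm _)
      _ ≤ M + ‖T‖ * (1 / 2 : ℝ≥0) := by gcongr; exact h v hv
      _ = M + ‖T‖ / 2 := by push_cast; ring
  have := T.opNorm_le_of_unit_norm ((norm_nonneg _).trans (le_add_half 0 (by simp)))
    fun x hx => le_add_half x hx.le
  linarith

lemma opNorm_le_four_mul_of_isCover [InnerProductSpace ℝ F] {N : Set F} {N' : Set E}
    (hN : Metric.IsCover (1 / 2) (Metric.closedBall (0 : F) 1) N)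
    (hN' : Metric.IsCover (1 / 2) (Metric.closedBall (0 : E) 1) N') {T : E →L[ℝ] F} {M : ℝ}
    (h : ∀ u ∈ N, ∀ v ∈ N', ⟪u, T v⟫ ≤ M) : ‖T‖ ≤ 4 * M :=
  calc ‖T‖ ≤ 2 * (2 * M) := opNorm_le_two_mul_of_isCover hN' fun v hv =>
        norm_le_two_mul_of_isCover hN fun u hu => h u hu v hv
    _ = 4 * M := by ring

end Nets

section Euclidean

variable {ι : Type*} [Fintype ι]

lemma lipschitzWith_toLp_comp {σ : ℝ → ℝ} {K : ℝ≥0} (hσ : LipschitzWith K σ) :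
    LipschitzWith K fun x : EuclideanSpace ℝ ι => WithLp.toLp 2 (σ ∘ x) := by
  refine LipschitzWith.of_dist_le_mul fun x y => ?_
  simp only [EuclideanSpace.dist_eq]
  refine Real.sqrt_le_iff.2 ⟨by positivity, ?_⟩
  rw [mul_pow, Real.sq_sqrt (by positivity), Finset.mul_sum]
  refine Finset.sum_le_sum fun i _ => ?_
  rw [← mul_pow]
  gcongr
  exact hσ.dist_le_mul _ _

lemma abs_sum_le_sqrt_mul_norm (u : EuclideanSpace ℝ ι) :
    |∑ i, u i| ≤ √(Fintype.card ι) * ‖u‖ := by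
  rw [EuclideanSpace.norm_eq, ← Real.sqrt_mul (Nat.cast_nonneg _)]
  refine Real.abs_le_sqrt ?_
  simpa using sq_sum_le_card_mul_sum_sq (s := Finset.univ) (f := u)

end Euclidean

section OperatorNorm

variable {m n : ℕ}

open scoped Matrix.Norms.L2Operator in
lemma opNorm_transpose (A : Matrix (Fin m) (Fin n) ℝ) : opNorm Aᵀ = opNorm A := by
  rw [← conjTranspose_eq_transpose_of_trivial]
  exact l2_opNorm_conjTranspose A

lemma opNorm_le_of_dotProduct_le {A : Matrix (Fin m) (Fin n) ℝ} {M : ℝ} (hM : 0 ≤ M)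
    (h : ∀ u v, ‖WithLp.toLp 2 u‖ = 1 → ‖WithLp.toLp 2 v‖ = 1 → u ⬝ᵥ A *ᵥ v ≤ M) :
    opNorm A ≤ M := by
  refine ContinuousLinearMap.opNorm_le_of_re_inner_le hM fun v u hv hu => ?_
  simpa [EuclideanSpace.inner_eq_star_dotProduct, toLpLin_apply] using h u.ofLp v.ofLp hu hv

variable {Ω : Type*} [MeasurableSpace Ω] {μ : Measure Ω} {A : Ω → Matrix (Fin m) (Fin n) ℝ}

lemma memLp_mulVec (hA : ∀ i j, MemLp (fun ω => A ω i j) 2 μ) (v : Fin n → ℝ) (i : Fin m) :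
    MemLp (fun ω => (A ω *ᵥ v) i) 2 μ :=
  memLp_finsetSum Finset.univ fun j _ => (hA i j).mul_const (v j)

lemma integrable_mulVec_dotProduct_mulVec (hA : ∀ i j, MemLp (fun ω => A ω i j) 2 μ)
    (u v : Fin n → ℝ) : Integrable (fun ω => (A ω *ᵥ u) ⬝ᵥ (A ω *ᵥ v)) μ :=
  integrable_finsetSum _ fun i _ => (memLp_mulVec hA u i).integrable_mul (memLp_mulVec hA v i)

lemma dotProduct_integral_gram_mulVec (hA : ∀ i j, MemLp (fun ω => A ω i j) 2 μ)
    (u v : Fin n → ℝ) :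
    u ⬝ᵥ (Matrix.of fun α β => ∫ ω, ((A ω)ᵀ * A ω) α β ∂μ) *ᵥ v =
      ∫ ω, (A ω *ᵥ u) ⬝ᵥ (A ω *ᵥ v) ∂μ := by
  have gram_int (α β : Fin n) : Integrable (fun ω => ((A ω)ᵀ * A ω) α β) μ :=
    integrable_finsetSum Finset.univ fun i _ => (hA i α).integrable_mul (hA i β)
  have gram_eq (ω : Ω) : (A ω *ᵥ u) ⬝ᵥ (A ω *ᵥ v) =
      ∑ α, u α * ∑ β, ((A ω)ᵀ * A ω) α β * v β := by
    rw [dotProduct_mulVec, vecMul_mulVec, ← dotProduct_mulVec]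
    rfl
  simp only [gram_eq]
  rw [integral_finsetSum _ fun α _ =>
    (integrable_finsetSum _ fun β _ => (gram_int α β).mul_const (v β)).const_mul (u α)]
  refine Finset.sum_congr rfl fun α _ => ?_
  rw [integral_const_mul, integral_finsetSum _ fun β _ => (gram_int α β).mul_const (v β)]
  simp only [integral_mul_const]
  rfl

lemma opNorm_integral_gram_le (hA : ∀ i j, MemLp (fun ω => A ω i j) 2 μ) {M : ℝ} (hM : 0 ≤ M)
    (h : ∀ v, ‖WithLp.toLp 2 v‖ = 1 → ∫ ω, (A ω *ᵥ v) ⬝ᵥ (A ω *ᵥ v) ∂μ ≤ M) :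
    opNorm (Matrix.of fun α β => ∫ ω, ((A ω)ᵀ * A ω) α β ∂μ) ≤ M := by
  refine opNorm_le_of_dotProduct_le hM fun u v hu hv => ?_
  have int := integrable_mulVec_dotProduct_mulVec hA
  calc u ⬝ᵥ (Matrix.of fun α β => ∫ ω, ((A ω)ᵀ * A ω) α β ∂μ) *ᵥ v
      = ∫ ω, (A ω *ᵥ u) ⬝ᵥ (A ω *ᵥ v) ∂μ := dotProduct_integral_gram_mulVec hA u v
    _ ≤ ∫ ω, ((A ω *ᵥ u) ⬝ᵥ (A ω *ᵥ u) + (A ω *ᵥ v) ⬝ᵥ (A ω *ᵥ v)) / 2 ∂μ := by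
        refine integral_mono (int u v) (((int u u).add (int v v)).div_const 2) fun ω => ?_
        have := dotProduct_self_star_nonneg (A ω *ᵥ u - A ω *ᵥ v)
        simp only [star_trivial, sub_dotProduct, dotProduct_sub,
          dotProduct_comm (A ω *ᵥ v) (A ω *ᵥ u)] at this
        simp only
        linarith
    _ ≤ M := by
        rw [integral_div, integral_add (int u u) (int v v)]
        linarith [h u hu, h v hv]

end OperatorNorm

section Features

variable {d n dc : ℕ}

/-- The normalized random feature matrix `X̌ = σ(WX)/√ď`. -/
noncomputable def featureMatrix (σ : ℝ → ℝ) (X : Matrix (Fin d) (Fin n) ℝ)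
    (W : Fin dc → Fin d → ℝ) : Matrix (Fin dc) (Fin n) ℝ :=
  (Real.sqrt dc)⁻¹ • (Matrix.of W * X).map σ

/-- The linear combination `σ(wᵀX)v` of the features of a single weight vector `w`; up to the
normalization `1/√ď` these are the coordinates of `X̌v`. -/
noncomputable def rowFeature (σ : ℝ → ℝ) (X : Matrix (Fin d) (Fin n) ℝ) (v : Fin n → ℝ)
    (w : Fin d → ℝ) : ℝ :=
  (σ ∘ (w ᵥ* X)) ⬝ᵥ v

lemma featureMatrix_mulVec (σ : ℝ → ℝ) (X : Matrix (Fin d) (Fin n) ℝ) (W : Fin dc → Fin d → ℝ)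
    (v : Fin n → ℝ) :
    featureMatrix σ X W *ᵥ v = (√dc)⁻¹ • fun i => rowFeature σ X v (W i) :=
  smul_mulVec _ _ _

variable {σ : ℝ → ℝ} {K B : ℝ≥0} {X : Matrix (Fin d) (Fin n) ℝ}

lemma measurable_rowFeature (hσ : Measurable σ) (X : Matrix (Fin d) (Fin n) ℝ) (v : Fin n → ℝ) :
    Measurable (rowFeature σ X v) :=
  Finset.measurable_sum Finset.univ fun α _ => (hσ.comp (by fun_prop)).mul_const (v α)

lemma lipschitzWith_rowFeature (hσ : LipschitzWith K σ) (hX : opNorm X ≤ B) (v : Fin n → ℝ) :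
    LipschitzWith (‖WithLp.toLp 2 v‖₊ * (K * B))
      fun w : EuclideanSpace ℝ (Fin d) => rowFeature σ X v w := by
  let T := LinearMap.toContinuousLinearMap (Matrix.toEuclideanLin Xᵀ)
  have T_le : ‖T‖₊ ≤ B := (opNorm_transpose X).trans_le hX
  have factor : (fun w : EuclideanSpace ℝ (Fin d) => rowFeature σ X v w) =
      innerSL ℝ (WithLp.toLp 2 v : EuclideanSpace ℝ (Fin n)) ∘
        (fun x : EuclideanSpace ℝ (Fin n) => WithLp.toLp 2 (σ ∘ x)) ∘ T := by
    ext w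
    simp [rowFeature, T, EuclideanSpace.inner_eq_star_dotProduct, toLpLin_apply, mulVec_transpose]
  rw [factor]
  refine ((innerSL ℝ _).lipschitz.comp
    ((lipschitzWith_toLp_comp hσ).comp T.lipschitz)).weaken ?_
  gcongr
  exact (innerSL_apply_norm ℝ _).le

lemma hasSubgaussianMGF_rowFeature_sub_integral (hσ : LipschitzWith K σ) (hX : opNorm X ≤ B)
    (v : Fin n → ℝ) :
    HasSubgaussianMGF (fun w => rowFeature σ X v w - ∫ z, rowFeature σ X v z ∂gaussianVec d)
      ((NNReal.pi / 2 * (‖WithLp.toLp 2 v‖₊ * (K * B))) ^ 2) (gaussianVec d) :=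
  hasSubgaussianMGF_sub_integral_pi_gaussianReal (lipschitzWith_rowFeature hσ hX v)

lemma memLp_rowFeature (hσ : LipschitzWith K σ) (X : Matrix (Fin d) (Fin n) ℝ) (v : Fin n → ℝ)
    (p : ℝ≥0) : MemLp (rowFeature σ X v) p (gaussianVec d) :=
  memLp_finsetSum Finset.univ fun α _ =>
    (memLp_comp_dotProduct hσ (fun i => X i α) p).mul_const (v α)

lemma memLp_featureMatrix_apply (hσ : LipschitzWith K σ) (X : Matrix (Fin d) (Fin n) ℝ) (p : ℝ≥0)
    (i : Fin dc) (α : Fin n) :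
    MemLp (fun W => featureMatrix σ X W i α) p (gaussianMat dc d) :=
  ((memLp_comp_dotProduct hσ (fun i => X i α) p).comp_measurePreserving
    (measurePreserving_eval (fun _ => gaussianVec d) i)).const_mul (√dc)⁻¹

lemma abs_integral_rowFeature_le (hσ : LipschitzWith K σ) (hσ_mean : ∫ x, σ x ∂stdGaussian = 0)
    (hX : ∑ α, ((∑ i, X i α ^ 2) - 1) ^ 2 ≤ (B : ℝ) ^ 2) (v : Fin n → ℝ) :
    |∫ w, rowFeature σ X v w ∂gaussianVec d| ≤ K * B * ‖WithLp.toLp 2 v‖ := by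
  let mean : Fin n → ℝ := fun α => ∫ w, σ (w ⬝ᵥ fun i => X i α) ∂gaussianVec d
  have integral_eq : ∫ w, rowFeature σ X v w ∂gaussianVec d =
      ⟪(WithLp.toLp 2 v : EuclideanSpace ℝ (Fin n)), WithLp.toLp 2 mean⟫ := by
    have summand_int (α : Fin n) :
        Integrable (fun w => σ (w ⬝ᵥ fun i => X i α) * v α) (gaussianVec d) :=
      (memLp_one_iff_integrable.1 (memLp_comp_dotProduct hσ _ 1)).mul_const (v α)
    simp only [EuclideanSpace.inner_toLp_toLp, star_trivial]
    calc ∫ w, rowFeature σ X v w ∂gaussianVec d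
        = ∑ α, ∫ w, σ (w ⬝ᵥ fun i => X i α) * v α ∂gaussianVec d :=
          integral_finsetSum Finset.univ fun α _ => summand_int α
      _ = mean ⬝ᵥ v := Finset.sum_congr rfl fun α _ => integral_mul_const _ _
  have norm_mean_le : ‖(WithLp.toLp 2 mean : EuclideanSpace ℝ (Fin n))‖ ≤ K * B := by
    refine (sq_le_sq₀ (norm_nonneg _) (by positivity)).1 ?_
    rw [EuclideanSpace.real_norm_sq_eq, mul_pow]
    calc ∑ α, mean α ^ 2 ≤ ∑ α, K ^ 2 * ((∑ i, X i α ^ 2) - 1) ^ 2 := by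
          refine Finset.sum_le_sum fun α _ => ?_
          rw [← sq_abs, ← sq_abs (_ - 1), ← mul_pow]
          gcongr
          exact abs_integral_comp_dotProduct_le hσ hσ_mean _
      _ ≤ K ^ 2 * B ^ 2 := by
          rw [← Finset.mul_sum]
          gcongr
  rw [integral_eq, mul_comm]
  exact (abs_real_inner_le_norm _ _).trans (by gcongr)

lemma integral_rowFeature_sq_le (hσ : LipschitzWith K σ) (hσ_mean : ∫ x, σ x ∂stdGaussian = 0)
    (hX_norm : opNorm X ≤ B) (hX_col : ∑ α, ((∑ i, X i α ^ 2) - 1) ^ 2 ≤ (B : ℝ) ^ 2)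
    (v : Fin n → ℝ) :
    ∫ w, rowFeature σ X v w ^ 2 ∂gaussianVec d ≤ 6 * (K * B * ‖WithLp.toLp 2 v‖) ^ 2 := by
  have variance_le : Var[rowFeature σ X v; gaussianVec d] ≤
      (Real.pi / 2) ^ 2 * (K * B * ‖WithLp.toLp 2 v‖) ^ 2 := by
    rw [variance_eq_integral (memLp_rowFeature hσ X v 1).aestronglyMeasurable.aemeasurable]
    refine (integral_sq_le_of_hasSubgaussianMGF
      (hasSubgaussianMGF_rowFeature_sub_integral hσ hX_norm v)).trans_eq ?_
    push_cast
    rw [NNReal.coe_real_pi]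
    ring
  have mean_sq_le : (∫ w, rowFeature σ X v w ∂gaussianVec d) ^ 2 ≤
      (K * B * ‖WithLp.toLp 2 v‖) ^ 2 :=
    sq_le_sq.2 ((abs_integral_rowFeature_le hσ hσ_mean hX_col v).trans (le_abs_self _))
  have pi_sq_le : (Real.pi / 2) ^ 2 + 1 ≤ 6 := by nlinarith [Real.pi_pos, Real.pi_lt_d2]
  rw [variance_eq_sub (memLp_rowFeature hσ X v 2)] at variance_le
  simp only [Pi.pow_apply] at variance_le
  nlinarith [sq_nonneg (K * B * ‖WithLp.toLp 2 v‖)]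

lemma opNorm_integral_gram_featureMatrix_le (hσ : LipschitzWith K σ)
    (hσ_mean : ∫ x, σ x ∂stdGaussian = 0) (hX_norm : opNorm X ≤ B)
    (hX_col : ∑ α, ((∑ i, X i α ^ 2) - 1) ^ 2 ≤ (B : ℝ) ^ 2) :
    opNorm (Matrix.of fun α β =>
      ∫ W, ((featureMatrix σ X W)ᵀ * featureMatrix σ X W) α β ∂gaussianMat dc d) ≤
        6 * (K * B) ^ 2 := by
  refine opNorm_integral_gram_le (fun i α => memLp_featureMatrix_apply hσ X 2 i α)
    (by positivity) fun v hv => ?_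
  have sq_int := (memLp_rowFeature hσ X v 2).integrable_sq
  have row_sq_int (i : Fin dc) :
      Integrable (fun W => rowFeature σ X v (W i) ^ 2) (gaussianMat dc d) :=
    (measurePreserving_eval (fun _ => gaussianVec d) i).integrable_comp_of_integrable sq_int
  have row_sq_le (i : Fin dc) :
      ∫ W, rowFeature σ X v (W i) ^ 2 ∂gaussianMat dc d ≤ 6 * (K * B) ^ 2 := by
    rw [integral_comp_eval (μ := fun _ => gaussianVec d) sq_int.aestronglyMeasurable]
    simpa only [hv, mul_one] using integral_rowFeature_sq_le hσ hσ_mean hX_norm hX_col v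
  have norm_sq_eq (W : Fin dc → Fin d → ℝ) :
      (featureMatrix σ X W *ᵥ v) ⬝ᵥ (featureMatrix σ X W *ᵥ v) =
        (dc : ℝ)⁻¹ * ∑ i, rowFeature σ X v (W i) ^ 2 := by
    rw [featureMatrix_mulVec, smul_dotProduct, dotProduct_smul, smul_smul, ← mul_inv,
      Real.mul_self_sqrt (Nat.cast_nonneg dc)]
    simp only [dotProduct, smul_eq_mul, sq]
  calc ∫ W, (featureMatrix σ X W *ᵥ v) ⬝ᵥ (featureMatrix σ X W *ᵥ v) ∂gaussianMat dc d
      = (dc : ℝ)⁻¹ * ∑ i, ∫ W, rowFeature σ X v (W i) ^ 2 ∂gaussianMat dc d := by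
        simp only [norm_sq_eq]
        rw [integral_const_mul, integral_finsetSum _ fun i _ => row_sq_int i]
    _ ≤ (dc : ℝ)⁻¹ * (dc * (6 * (K * B) ^ 2)) := by
        gcongr
        simpa using Finset.sum_le_card_nsmul Finset.univ _ _ fun i _ => row_sq_le i
    _ ≤ 6 * (K * B) ^ 2 := by
        rw [← mul_assoc]
        exact mul_le_of_le_one_left (by positivity) inv_mul_le_one

lemma hasSubgaussianMGF_sum_mul_rowFeature_sub_integral (hσ : LipschitzWith K σ)
    (hX : opNorm X ≤ B) {u : EuclideanSpace ℝ (Fin dc)} {v : EuclideanSpace ℝ (Fin n)}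
    (hu : ‖u‖ ≤ 1) (hv : ‖v‖ ≤ 1) :
    HasSubgaussianMGF (fun W => ∑ i, u i *
        (rowFeature σ X v (W i) - ∫ w, rowFeature σ X v w ∂gaussianVec d))
      ((NNReal.pi / 2 * (K * B)) ^ 2) (gaussianMat dc d) := by
  have sum_le_one : ∑ i, ‖u i‖₊ ^ 2 ≤ 1 := by
    rw [← NNReal.coe_le_coe]
    push_cast
    rw [← EuclideanSpace.norm_sq_eq]
    exact pow_le_one₀ (norm_nonneg u) hu
  have v_le_one : ‖WithLp.toLp 2 v.ofLp‖₊ ≤ 1 := hv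
  refine hasSubgaussianMGF_mono (hasSubgaussianMGF_sum_mul_eval
    (hasSubgaussianMGF_rowFeature_sub_integral hσ hX v)
    ((measurable_rowFeature hσ.continuous.measurable X v).sub_const _) u) ?_
  calc (∑ i, ‖u i‖₊ ^ 2) * (NNReal.pi / 2 * (‖WithLp.toLp 2 v.ofLp‖₊ * (K * B))) ^ 2
      ≤ 1 * (NNReal.pi / 2 * (1 * (K * B))) ^ 2 := by gcongr
    _ = (NNReal.pi / 2 * (K * B)) ^ 2 := by ring

lemma measureReal_lt_sum_mul_rowFeature_le (hσ : LipschitzWith K σ)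
    (hσ_mean : ∫ x, σ x ∂stdGaussian = 0) (hX_norm : opNorm X ≤ B)
    (hX_col : ∑ α, ((∑ i, X i α ^ 2) - 1) ^ 2 ≤ (B : ℝ) ^ 2) {u : EuclideanSpace ℝ (Fin dc)}
    {v : EuclideanSpace ℝ (Fin n)} (hu : ‖u‖ ≤ 1) (hv : ‖v‖ ≤ 1) {t : ℝ} (ht : √dc ≤ t) :
    (gaussianMat dc d).real {W | t * (5 * (K * B)) < ∑ i, u i * rowFeature σ X v (W i)} ≤
      Real.exp (-3 * t ^ 2) := by
  have t_nonneg : 0 ≤ t := (Real.sqrt_nonneg _).trans ht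
  set m := ∫ w, rowFeature σ X v w ∂gaussianVec d
  have mean_le : m * ∑ i, u i ≤ t * (K * B) := by
    calc m * ∑ i, u i ≤ |m| * |∑ i, u i| := (le_abs_self _).trans_eq (abs_mul _ _)
      _ ≤ (K * B * ‖v‖) * (√dc * ‖u‖) := by
          gcongr
          · exact abs_integral_rowFeature_le hσ hσ_mean hX_col v
          · simpa using abs_sum_le_sqrt_mul_norm u
      _ ≤ (K * B * 1) * (t * 1) := by gcongr
      _ = t * (K * B) := by ring
  have fluctuation := hasSubgaussianMGF_sum_mul_rowFeature_sub_integral hσ hX_norm hu hv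
  have threshold_le : 5 / 2 * t * √((NNReal.pi / 2 * (K * B)) ^ 2 : ℝ≥0) ≤ 4 * t * (K * B) := by
    rw [NNReal.coe_pow, Real.sqrt_sq (NNReal.coe_nonneg _)]
    push_cast
    rw [NNReal.coe_real_pi]
    nlinarith [Real.pi_lt_d2, mul_nonneg t_nonneg (mul_nonneg K.coe_nonneg B.coe_nonneg)]
  calc (gaussianMat dc d).real {W | t * (5 * (K * B)) < ∑ i, u i * rowFeature σ X v (W i)}
      ≤ (gaussianMat dc d).real {W | 5 / 2 * t * √((NNReal.pi / 2 * (K * B)) ^ 2 : ℝ≥0) <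
          ∑ i, u i * (rowFeature σ X v (W i) - m)} := by
        refine measureReal_mono (Set.ofPred_subset_ofPred.2 fun W hW => ?_)
        simp only [mul_sub, Finset.sum_sub_distrib, ← Finset.sum_mul]
        linarith
    _ ≤ Real.exp (-(5 / 2 * t) ^ 2 / 2) :=
        measureReal_lt_le_exp_of_hasSubgaussianMGF fluctuation (by positivity)
    _ ≤ Real.exp (-3 * t ^ 2) := by
        gcongr
        nlinarith [sq_nonneg t]

lemma inv_sqrt_mul_sqrt_add_sqrt_le (a b : ℕ) : (√a)⁻¹ * (√a + √b) ≤ 1 + √(b / a) := by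
  rw [mul_add, Real.sqrt_div (Nat.cast_nonneg _), ← div_eq_inv_mul (√b)]
  gcongr
  exact inv_mul_le_one

lemma opNorm_featureMatrix_le_of_isCover {N : Set (EuclideanSpace ℝ (Fin dc))}
    {N' : Set (EuclideanSpace ℝ (Fin n))}
    (hN : Metric.IsCover (1 / 2) (Metric.closedBall 0 1) N)
    (hN' : Metric.IsCover (1 / 2) (Metric.closedBall 0 1) N') {W : Fin dc → Fin d → ℝ} {M : ℝ}
    (hM : 0 ≤ M) (h : ∀ u ∈ N, ∀ v ∈ N', ∑ i, u i * rowFeature σ X v (W i) ≤ (√dc + √n) * M) :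
    opNorm (featureMatrix σ X W) ≤ 4 * ((1 + √(n / dc)) * M) := by
  refine opNorm_le_four_mul_of_isCover hN hN' fun u hu v hv => ?_
  have inner_eq : ⟪u, Matrix.toEuclideanLin (featureMatrix σ X W) v⟫ =
      (√dc)⁻¹ * ∑ i, u i * rowFeature σ X v (W i) := by
    rw [EuclideanSpace.inner_eq_star_dotProduct, star_trivial, ofLp_toLpLin, toLin'_apply,
      featureMatrix_mulVec, smul_dotProduct, dotProduct_comm]
    rfl
  rw [LinearMap.coe_toContinuousLinearMap', inner_eq]
  calc (√dc)⁻¹ * ∑ i, u i * rowFeature σ X v (W i) ≤ (√dc)⁻¹ * ((√dc + √n) * M) := by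
        gcongr
        exact h u hu v hv
    _ ≤ (1 + √(n / dc)) * M := by
        rw [← mul_assoc]
        gcongr
        exact inv_sqrt_mul_sqrt_add_sqrt_le dc n

lemma card_mul_card_mul_exp_le {p q a b : ℕ} (hp : p ≤ 5 ^ a) (hq : q ≤ 5 ^ b) {t : ℝ}
    (ht : a + b ≤ t ^ 2) : (p * q : ℕ) * Real.exp (-3 * t ^ 2) ≤ Real.exp (-b) := by
  have five_le : (5 : ℝ) ≤ Real.exp 2 := by
    rw [show (2 : ℝ) = 1 + 1 by norm_num, Real.exp_add]
    nlinarith [Real.exp_one_gt_d9]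
  calc (p * q : ℕ) * Real.exp (-3 * t ^ 2)
      ≤ (Real.exp 2) ^ (a + b) * Real.exp (-3 * t ^ 2) := by
        gcongr
        calc ((p * q : ℕ) : ℝ) ≤ (5 ^ a * 5 ^ b : ℕ) := by gcongr
          _ = 5 ^ (a + b) := by push_cast; ring
          _ ≤ (Real.exp 2) ^ (a + b) := by gcongr
    _ = Real.exp (2 * (a + b) - 3 * t ^ 2) := by
        rw [← Real.exp_nat_mul, ← Real.exp_add]
        push_cast
        ring_nf
    _ ≤ Real.exp (-b) := by
        gcongr
        linarith [Nat.cast_nonneg (α := ℝ) a]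

lemma measureReal_lt_opNorm_featureMatrix_le (hσ : LipschitzWith K σ)
    (hσ_mean : ∫ x, σ x ∂stdGaussian = 0) (hX_norm : opNorm X ≤ B)
    (hX_col : ∑ α, ((∑ i, X i α ^ 2) - 1) ^ 2 ≤ (B : ℝ) ^ 2) :
    (gaussianMat dc d).real
        {W | 20 * (1 + √(n / dc)) * (K * B) < opNorm (featureMatrix σ X W)} ≤
      Real.exp (-n) := by
  obtain ⟨N, N_sub, N_card, N_cover⟩ :=
    exists_finset_isCover_closedBall (EuclideanSpace ℝ (Fin dc))
  obtain ⟨N', N'_sub, N'_card, N'_cover⟩ :=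
    exists_finset_isCover_closedBall (EuclideanSpace ℝ (Fin n))
  rw [finrank_euclideanSpace_fin] at N_card N'_card
  set t := √(dc : ℝ) + √(n : ℝ)
  have t_sq_ge : (dc : ℝ) + n ≤ t ^ 2 := by
    rw [add_sq, Real.sq_sqrt (Nat.cast_nonneg _), Real.sq_sqrt (Nat.cast_nonneg _)]
    linarith [mul_nonneg (Real.sqrt_nonneg dc) (Real.sqrt_nonneg n)]
  let bad (p : EuclideanSpace ℝ (Fin dc) × EuclideanSpace ℝ (Fin n)) : Set (Fin dc → Fin d → ℝ) :=
    {W | t * (5 * (K * B)) < ∑ i, p.1 i * rowFeature σ X p.2 (W i)}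
  have subset_bad : {W | 20 * (1 + √(n / dc)) * (K * B) < opNorm (featureMatrix σ X W)} ⊆
      ⋃ p ∈ N ×ˢ N', bad p := by
    intro W
    contrapose!
    intro hW
    simp only [bad, Set.mem_iUnion, Finset.mem_product, Set.mem_ofPred_eq, not_exists, not_lt,
      Prod.forall] at hW ⊢
    calc opNorm (featureMatrix σ X W) ≤ 4 * ((1 + √(n / dc)) * (5 * (K * B))) :=
          opNorm_featureMatrix_le_of_isCover N_cover N'_cover (by positivity)
            fun u hu v hv => hW u v ⟨hu, hv⟩
      _ = 20 * (1 + √(n / dc)) * (K * B) := by ring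
  have bad_le (p) (hp : p ∈ N ×ˢ N') :
      (gaussianMat dc d).real (bad p) ≤ Real.exp (-3 * t ^ 2) := by
    rw [Finset.mem_product] at hp
    exact measureReal_lt_sum_mul_rowFeature_le hσ hσ_mean hX_norm hX_col
      (by simpa using N_sub hp.1) (by simpa using N'_sub hp.2)
      (le_add_of_nonneg_right (Real.sqrt_nonneg _))
  calc _ ≤ (gaussianMat dc d).real (⋃ p ∈ N ×ˢ N', bad p) :=
        measureReal_mono subset_bad (measure_ne_top _ _)
    _ ≤ ∑ p ∈ N ×ˢ N', (gaussianMat dc d).real (bad p) := measureReal_biUnion_finset_le _ _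
    _ ≤ (N.card * N'.card : ℕ) * Real.exp (-3 * t ^ 2) := by
        simpa [Finset.card_product] using Finset.sum_le_card_nsmul _ _ _ bad_le
    _ ≤ Real.exp (-n) := card_mul_card_mul_exp_le N_card N'_card t_sq_ge

lemma ofReal_one_sub_le_measure_opNorm_featureMatrix_le (hσ : LipschitzWith K σ)
    (hσ_mean : ∫ x, σ x ∂stdGaussian = 0) (hX_norm : opNorm X ≤ B)
    (hX_col : ∑ α, ((∑ i, X i α ^ 2) - 1) ^ 2 ≤ (B : ℝ) ^ 2) :
    ENNReal.ofReal (1 - Real.exp (-n)) ≤ gaussianMat dc d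
      {W | opNorm (featureMatrix σ X W) ≤ 20 * (1 + √(n / dc)) * (K * B)} := by
  set good := {W | opNorm (featureMatrix σ X W) ≤ 20 * (1 + √(n / dc)) * (K * B)}
  have compl_le : (gaussianMat dc d).real goodᶜ ≤ Real.exp (-n) := by
    simpa [good, Set.compl_ofPred] using
      measureReal_lt_opNorm_featureMatrix_le hσ hσ_mean hX_norm hX_col
  have one_le : 1 ≤ (gaussianMat dc d).real good + (gaussianMat dc d).real goodᶜ := by
    simpa using measureReal_union_le (μ := gaussianMat dc d) good goodᶜ
  refine ENNReal.ofReal_le_of_le_toReal ?_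
  change 1 - Real.exp (-n) ≤ (gaussianMat dc d).real good
  linarith

end Features

theorem norm_bounds_general :
    ∃ C : ℝ, 0 < C ∧ ∃ c : ℝ, 0 < c ∧
      ∀ (d n dc : ℕ) (X : Matrix (Fin d) (Fin n) ℝ) (B : ℝ) (K : ℝ≥0) (σ : ℝ → ℝ),
        LipschitzWith K σ →
        (∫ x, σ x ∂stdGaussian) = 0 →
        opNorm X ≤ B →
        ∑ α : Fin n, ((∑ i, X i α ^ 2) - 1) ^ 2 ≤ B ^ 2 →
        opNorm (Matrix.of fun α β : Fin n =>
            ∫ W, ((featureMatrix σ X W)ᵀ * featureMatrix σ X W) α β ∂gaussianMat dc d) ≤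
          C * K ^ 2 * B ^ 2 ∧
        gaussianMat dc d
            {W | opNorm (featureMatrix σ X W) ≤ C * (1 + √((n : ℝ) / (dc : ℝ))) * K * B} ≥
          ENNReal.ofReal (1 - 2 * Real.exp (-c * n)) := by
  refine ⟨20, by norm_num, 1, one_pos, fun d n dc X B K σ hσ hσ_mean hX_norm hX_col => ?_⟩
  lift B to ℝ≥0 using (norm_nonneg _).trans hX_norm
  constructor
  · calc _ ≤ 6 * ((K : ℝ) * B) ^ 2 :=
          opNorm_integral_gram_featureMatrix_le hσ hσ_mean hX_norm hX_col
      _ ≤ 20 * ((K : ℝ) * B) ^ 2 := by gcongr; norm_num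
      _ = 20 * K ^ 2 * B ^ 2 := by ring
  · calc ENNReal.ofReal (1 - 2 * Real.exp (-1 * n)) ≤ ENNReal.ofReal (1 - Real.exp (-n)) := by
          gcongr
          rw [neg_one_mul]
          linarith [Real.exp_pos (-n : ℝ)]
      _ ≤ _ := by
          simpa only [mul_assoc] using
            ofReal_one_sub_le_measure_opNorm_featureMatrix_le hσ hσ_mean hX_norm hX_col

theorem norm_bounds :
    ∃ C : ℝ, 0 < C ∧ ∃ c : ℝ, 0 < c ∧
      ∀ (d n dc : ℕ) (X : Matrix (Fin d) (Fin n) ℝ) (ε B lamσ : ℝ)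
        (σ σ' σ'' : ℝ → ℝ),
        (∀ x, HasDerivAt σ (σ' x) x) →
        (∀ x, HasDerivAt σ' (σ'' x) x) →
        (∀ x, |σ' x| ≤ lamσ) →
        (∀ x, |σ'' x| ≤ lamσ) →
        (∫ x, σ x ∂stdGaussian) = 0 →
        (∫ x, (σ x) ^ 2 ∂stdGaussian) = 1 →
        IsOrthonormal ε B X →
        ε < 1 / lamσ →
        -- (a) operator norm of Φ = E[X̌ᵀX̌]
        (opNorm
            (Matrix.of fun α β : Fin n =>
              ∫ W, (((Real.sqrt dc)⁻¹ • ((Matrix.of W * X).map σ))ᵀ *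
                  ((Real.sqrt dc)⁻¹ • ((Matrix.of W * X).map σ))) α β ∂gaussianMat dc d) ≤
          C * lamσ ^ 2 * B ^ 2) ∧
        -- (b) operator norm of X̌, with high probability
        gaussianMat dc d
            {W | opNorm ((Real.sqrt dc)⁻¹ • ((Matrix.of W * X).map σ)) ≤
              C * (1 + Real.sqrt ((n : ℝ) / (dc : ℝ))) * lamσ * B} ≥
          ENNReal.ofReal (1 - 2 * Real.exp (-c * n)) := by
  obtain ⟨C, hC, c, hc, bounds⟩ := norm_bounds_general
  refine ⟨C, hC, c, hc, fun d n dc X ε B lamσ σ σ' σ'' hσ' _ hσ'_le _ hσ_mean _ hX _ => ?_⟩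
  lift lamσ to ℝ≥0 using (abs_nonneg _).trans (hσ'_le 0)
  have σ_lipschitz : LipschitzWith lamσ σ :=
    lipschitzWith_of_nnnorm_deriv_le (fun x => (hσ' x).differentiableAt) fun x => by
      rw [(hσ' x).deriv]
      exact hσ'_le x
  exact bounds d n dc X B lamσ σ σ_lipschitz hσ_mean hX.2.2.1 hX.2.2.2
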